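/- Let n ≥ 2 and let P be the tropical polytope generated by v^1,…,v^p ∈ ℝ^n. Let (a^1,I^1),…,(a^m,I^m) be finitely many pairs where each a^s ∈ P and each I^s is a nonempty proper subset of {1,…,n}, such that P = ⋂_{s=1}^m H(a^s,I^s) and, for every s, ⋂_{t ≠ s} H(a^t,I^t) ≠ P. Then for every s ∈ {1,…,m} there exist a nonempty proper subset I ⊆ {1,…,n} and an index j ∈ {1,…,n} \ I such that a^s is an (I,j)-pseudovertex of P. -/

import Mathlib

section Defs
variable {α : Type*} [LinearOrder α] [AddCommGroup α]

/-- The sector `S(a,i) = {x | x_j - a_j ≤ x_i - a_i for all j}`. -/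
def sector {n : ℕ} (a : Fin n → α) (i : Fin n) : Set (Fin n → α) :=
  {x | ∀ j, x j - a j ≤ x i - a i}

/-- The tropical polytope generated by the points `v 0, …, v (p-1)`:
each coordinate of `x` is the maximum over `r` of `l r + v r i`. -/
def tropPoly {n p : ℕ} (v : Fin p → Fin n → α) : Set (Fin n → α) :=
  {x | ∃ l : Fin p → α, ∀ i, IsGreatest (Set.range fun r => l r + v r i) (x i)}

/-- `v` is an extreme point of `P` of type `i`. -/
def ExtremeOfType {n : ℕ} (P : Set (Fin n → α)) (v : Fin n → α) (i : Fin n) : Prop :=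
  v ∈ P ∧ ∀ x ∈ P ∩ sector v i, ∃ c : α, x = fun k => v k + c

/-- `v` is an extreme point of `P`. -/
def IsExtremePt {n : ℕ} (P : Set (Fin n → α)) (v : Fin n → α) : Prop :=
  v ∈ P ∧ ∀ x ∈ P, ∀ y ∈ P, (∀ k, v k = max (x k) (y k)) → v = x ∨ v = y

/-- The tropical half-space `H(a,I)`: `max_{i ∈ I} (x_i - a_i) ≥ max_{j ∉ I} (x_j - a_j)`. -/
def halfSpace {n : ℕ} (a : Fin n → α) (I : Set (Fin n)) : Set (Fin n → α) :=
  {x | ∃ i ∈ I, ∀ j ∉ I, x j - a j ≤ x i - a i}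

/-- `S_i(a)`, the set of indices `r` such that `v r ∈ S(a, i)`. -/
def typeSet {n p : ℕ} (v : Fin p → Fin n → α) (a : Fin n → α) (i : Fin n) : Set (Fin p) :=
  {r | v r ∈ sector a i}

/-- `a` is an `(I,j)`-pseudovertex of the tropical polytope generated by `v`. -/
def IsPseudovertex {n p : ℕ} (v : Fin p → Fin n → α) (a : Fin n → α) (I : Set (Fin n))
    (j : Fin n) : Prop :=
  (∀ r, ∃ i ∈ I, r ∈ typeSet v a i) ∧
  (∀ k ∉ I, ∃ i ∈ I, (typeSet v a i ∩ typeSet v a k).Nonempty) ∧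
  (∀ i ∈ I, ∃ r, r ∈ typeSet v a i ∩ typeSet v a j ∧ ∀ h ∈ I, h ≠ i → r ∉ typeSet v a h)

end Defs

/-- `P` is pure: `P₀ = {x ∈ P | x 0 = 0}` equals the closure of its interior, relative to
the hyperplane `{x | x 0 = 0}` with the subspace topology. -/
def IsPure {n : ℕ} [NeZero n] (P : Set (Fin n → ℝ)) : Prop :=
  letI P0 : Set {x : Fin n → ℝ // x 0 = 0} := {x | (x : Fin n → ℝ) ∈ P}
  P0 = closure (interior P0)

/-!
Write `P = Q ∩ H(a,I)`, where `Q` is the intersection of the other half-spaces, and pick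
`x ∈ Q \ H(a,I)`, lying in a sector `S(a,j)` with `j ∉ I`. For `u ∈ P`, the join of the
translates of `x` and `u` touching `a` from below lies in `Q`, and in `H(a,I)` because `u` touches
`a` in a coordinate of `I`; so it lies in `P`. A generator `v r` touching this join in the
coordinate `j` lies in `S(a,j)`, and every sector `S(a,k)` with `k ∈ I` that contains `v r` also
contains `u`. If `I' ⊆ I` is minimal such that the sectors `S(a,i)`, `i ∈ I'`, cover the
generators, then each `i ∈ I'` has a generator `u` lying in no other sector of the cover, and the
corresponding `v r` witnesses condition (iii) for `i`.
-/

theorem exists_irredundant_subcover {κ ρ : Type*} {S : κ → Set ρ} {I : Set κ} (hfin : I.Finite)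
    (hcover : ∀ r, ∃ i ∈ I, r ∈ S i) :
    ∃ T ⊆ I, (∀ r, ∃ i ∈ T, r ∈ S i) ∧ ∀ i ∈ T, ∃ r, ∀ h ∈ T, h ≠ i → r ∉ S h := by
  obtain ⟨T, hT⟩ := (hfin.finite_subsets.subset
    (Set.sep_subset _ fun T => ∀ r, ∃ i ∈ T, r ∈ S i)).exists_minimal ⟨I, Set.Subset.rfl, hcover⟩
  obtain ⟨hTI, hTcover⟩ := hT.prop
  refine ⟨T, hTI, hTcover, fun i hi => ?_⟩
  by_contra! hredundant
  have hcover_sdiff : ∀ r, ∃ h ∈ T \ {i}, r ∈ S h := fun r =>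
    let ⟨h, hh, hne, hr⟩ := hredundant r
    ⟨h, ⟨hh, hne⟩, hr⟩
  have hle : T ⊆ T \ {i} :=
    hT.le_of_le ⟨Set.sdiff_subset.trans hTI, hcover_sdiff⟩ Set.sdiff_subset
  exact (hle hi).2 rfl

section TropicalConvexity

variable {α : Type*} [LinearOrder α] [AddCommGroup α]

/-- Tropical convexity, in the sense without normalization of the coefficients: `Q` is closed under
all tropical linear combinations `max (c + x) (d + y)`, in particular under adding a constant to
all coordinates. -/
def IsTropConvex {κ : Type*} (Q : Set (κ → α)) : Prop :=
  ∀ x ∈ Q, ∀ y ∈ Q, ∀ c d : α, (fun k => max (c + x k) (d + y k)) ∈ Q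

theorem IsTropConvex.biInter {κ σ : Type*} {T : Set σ} {Q : σ → Set (κ → α)}
    (hQ : ∀ t ∈ T, IsTropConvex (Q t)) : IsTropConvex (⋂ t ∈ T, Q t) :=
  fun x hx y hy c d => Set.mem_iInter₂.2 fun t ht =>
    hQ t ht x (Set.mem_iInter₂.1 hx t ht) y (Set.mem_iInter₂.1 hy t ht) c d

variable {n p : ℕ} {v : Fin p → Fin n → α} {a x z : Fin n → α} {I : Set (Fin n)} {i j k : Fin n}

theorem exists_mem_sector [Nonempty (Fin n)] (a x : Fin n → α) : ∃ i, x ∈ sector a i :=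
  Finite.exists_max fun i => x i - a i

theorem mem_halfSpace_iff : x ∈ halfSpace a I ↔ ∃ i ∈ I, x ∈ sector a i := by
  refine ⟨fun ⟨i, hi, hxi⟩ => ?_, fun ⟨i, hi, hxi⟩ => ⟨i, hi, fun j _ => hxi j⟩⟩
  have : Nonempty (Fin n) := ⟨i⟩
  obtain ⟨k, hk⟩ := exists_mem_sector a x
  by_cases hkI : k ∈ I
  · exact ⟨k, hkI, hk⟩
  · exact ⟨i, hi, fun l => (hk l).trans (hxi k hkI)⟩

theorem IsPseudovertex.nonempty (ha : IsPseudovertex v a I j) (hj : j ∉ I) : I.Nonempty :=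
  let ⟨i, hi, _⟩ := ha.2.1 j hj
  ⟨i, hi⟩

variable [IsOrderedAddMonoid α]

theorem mem_sector_iff_exists_add :
    x ∈ sector a i ↔ ∃ c, (∀ k, c + x k ≤ a k) ∧ c + x i = a i := by
  constructor
  · intro hx
    refine ⟨a i - x i, fun k => ?_, sub_add_cancel _ _⟩
    have := hx k
    grind
  · rintro ⟨c, hle, heq⟩ k
    have := hle k
    grind

theorem add_eq_of_mem_sector {c : α} (hle : ∀ l, c + x l ≤ a l) (heq : c + x i = a i)
    (hx : x ∈ sector a k) : c + x k = a k := by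
  have := hle k
  have := hx i
  grind

theorem sector_subset_sector_of_le (hle : ∀ k, z k ≤ a k) (heq : z j = a j) :
    sector z j ⊆ sector a j := by
  intro x hx k
  have := hx k
  have := hle k
  grind

theorem apex_eq_of_mem_sector_of_mem_sector (hle : ∀ k, z k ≤ a k) (heq : z j = a j)
    (hxz : x ∈ sector z j) (hxa : x ∈ sector a k) : z k = a k := by
  have := hle k
  have := hxz k
  have := hxa j
  grind

theorem mem_sector_of_add_le {c : α} (hle : ∀ k, c + x k ≤ z k) (heq : c + x j = z j)
    (hz : z ∈ sector a j) (hx : x ∈ sector a i) : z ∈ sector a i := by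
  intro k
  have := hle i
  have := hz k
  have := hx j
  grind

theorem isTropConvex_halfSpace (a : Fin n → α) (I : Set (Fin n)) :
    IsTropConvex (halfSpace a I) := by
  intro x hx y hy c d
  obtain ⟨i, hi, hxi⟩ := mem_halfSpace_iff.1 hx
  obtain ⟨i', hi', hyi'⟩ := mem_halfSpace_iff.1 hy
  have : Nonempty (Fin n) := ⟨i⟩
  obtain ⟨j, hj⟩ := exists_mem_sector a fun k => max (c + x k) (d + y k)
  rw [mem_halfSpace_iff]
  rcases max_choice (c + x j) (d + y j) with hmax | hmax
  · exact ⟨i, hi, mem_sector_of_add_le (fun _ => le_max_left _ _) hmax.symm hj hxi⟩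
  · exact ⟨i', hi', mem_sector_of_add_le (fun _ => le_max_right _ _) hmax.symm hj hyi'⟩

theorem mem_tropPoly_iff_typeSet_nonempty :
    a ∈ tropPoly v ↔ ∀ k, (typeSet v a k).Nonempty := by
  constructor
  · rintro ⟨l, hl⟩ k
    obtain ⟨r, hr⟩ := (hl k).1
    exact ⟨r, mem_sector_iff_exists_add.2 ⟨l r, fun q => (hl q).2 ⟨r, rfl⟩, hr⟩⟩
  · intro h
    rcases isEmpty_or_nonempty (Fin n) with _ | _
    · exact ⟨0, isEmptyElim⟩
    choose f hf using fun r => exists_mem_sector a (v r)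
    choose l hle heq using fun r => mem_sector_iff_exists_add.1 (hf r)
    refine ⟨l, fun k => ⟨?_, Set.forall_mem_range.2 fun r => hle r k⟩⟩
    obtain ⟨r, hr⟩ := h k
    exact ⟨r, add_eq_of_mem_sector (hle r) (heq r) hr⟩

theorem generator_mem_tropPoly (v : Fin p → Fin n → α) (r : Fin p) : v r ∈ tropPoly v :=
  mem_tropPoly_iff_typeSet_nonempty.2 fun k => ⟨r, fun j => by simp only [sub_self, le_refl]⟩

theorem isPseudovertex_of_cover (ha : a ∈ tropPoly v) (hcover : ∀ r, ∃ i ∈ I, r ∈ typeSet v a i)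
    (hj : ∀ i ∈ I, ∃ r ∈ typeSet v a j, ∀ h ∈ I, h ≠ i → r ∉ typeSet v a h) :
    IsPseudovertex v a I j := by
  refine ⟨hcover, fun k _ => ?_, fun i hi => ?_⟩
  · obtain ⟨r, hr⟩ := mem_tropPoly_iff_typeSet_nonempty.1 ha k
    obtain ⟨i, hi, hri⟩ := hcover r
    exact ⟨i, hi, r, hri, hr⟩
  · obtain ⟨r, hrj, hr⟩ := hj i hi
    obtain ⟨i', hi', hri'⟩ := hcover r
    obtain rfl : i' = i := by_contra fun hne => hr i' hi' hne hri'
    exact ⟨r, ⟨hri', hrj⟩, hr⟩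

variable {Q : Set (Fin n → α)} {u : Fin n → α}

theorem exists_mem_typeSet_forall_mem_sector (hQ : IsTropConvex Q)
    (hP : tropPoly v = Q ∩ halfSpace a I) (hxQ : x ∈ Q) (hxj : x ∈ sector a j)
    (hxI : x ∉ halfSpace a I) (hu : u ∈ tropPoly v) :
    ∃ r ∈ typeSet v a j, ∀ k ∈ I, r ∈ typeSet v a k → u ∈ sector a k := by
  obtain ⟨huQ, huI⟩ : u ∈ Q ∩ halfSpace a I := hP ▸ hu
  obtain ⟨i, hi, hui⟩ := mem_halfSpace_iff.1 huI
  obtain ⟨c, hcx, hcj⟩ := mem_sector_iff_exists_add.1 hxj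
  obtain ⟨d, hdu, hdi⟩ := mem_sector_iff_exists_add.1 hui
  let z : Fin n → α := fun k => max (c + x k) (d + u k)
  have hza : ∀ k, z k ≤ a k := fun k => max_le (hcx k) (hdu k)
  have hzi : z i = a i := (hza i).antisymm (hdi.symm.le.trans (le_max_right _ _))
  have hzj : z j = a j := (hza j).antisymm (hcj.symm.le.trans (le_max_left _ _))
  have hzI : z ∈ halfSpace a I :=
    mem_halfSpace_iff.2 ⟨i, hi, mem_sector_iff_exists_add.2 ⟨0, by simpa using hza, by simpa⟩⟩
  have hzP : z ∈ tropPoly v := hP ▸ ⟨hQ x hxQ u huQ c d, hzI⟩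
  obtain ⟨r, hr⟩ := mem_tropPoly_iff_typeSet_nonempty.1 hzP j
  refine ⟨r, sector_subset_sector_of_le hza hzj hr, fun k hk hrk => ?_⟩
  have hzk : max (c + x k) (d + u k) = a k := apex_eq_of_mem_sector_of_mem_sector hza hzj hr hrk
  rcases max_choice (c + x k) (d + u k) with hmax | hmax
  · exact absurd (mem_halfSpace_iff.2
      ⟨k, hk, mem_sector_iff_exists_add.2 ⟨c, hcx, hmax.symm.trans hzk⟩⟩) hxI
  · exact mem_sector_iff_exists_add.2 ⟨d, hdu, hmax.symm.trans hzk⟩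

theorem exists_isPseudovertex_of_tropPoly_eq_inter_halfSpace (hQ : IsTropConvex Q)
    (hP : tropPoly v = Q ∩ halfSpace a I) (ha : a ∈ tropPoly v) (hne : Q ≠ tropPoly v) :
    ∃ I' ⊆ I, ∃ j ∉ I, IsPseudovertex v a I' j := by
  have hPI : tropPoly v ⊆ halfSpace a I := hP ▸ Set.inter_subset_right
  obtain ⟨x, hxQ, hxI⟩ : ∃ x ∈ Q, x ∉ halfSpace a I :=
    Set.not_subset.1 fun h => hne (hP ▸ (Set.inter_eq_left.2 h).symm)
  have : Nonempty (Fin n) := Exists.nonempty (hPI ha)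
  obtain ⟨j, hxj⟩ := exists_mem_sector a x
  have hjI : j ∉ I := fun hj => hxI (mem_halfSpace_iff.2 ⟨j, hj, hxj⟩)
  have hcover : ∀ r, ∃ i ∈ I, r ∈ typeSet v a i := fun r =>
    mem_halfSpace_iff.1 (hPI (generator_mem_tropPoly v r))
  obtain ⟨I', hI'I, hcover', hprivate⟩ := exists_irredundant_subcover I.toFinite hcover
  refine ⟨I', hI'I, j, hjI, isPseudovertex_of_cover ha hcover' fun i hi => ?_⟩
  obtain ⟨r₀, hr₀⟩ := hprivate i hi
  obtain ⟨r, hrj, hr⟩ :=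
    exists_mem_typeSet_forall_mem_sector hQ hP hxQ hxj hxI (generator_mem_tropPoly v r₀)
  exact ⟨r, hrj, fun h hh hhi hrh => hr₀ h hh hhi (hr h (hI'I hh) hrh)⟩

theorem nonredundant_apex_isPseudovertex_general {σ : Type*} {a : σ → Fin n → α}
    {I : σ → Set (Fin n)} {s : σ} (ha : a s ∈ tropPoly v)
    (hrep : tropPoly v = ⋂ t, halfSpace (a t) (I t))
    (hnonred : (⋂ t ∈ ({s}ᶜ : Set σ), halfSpace (a t) (I t)) ≠ tropPoly v) :
    ∃ I' ⊆ I s, ∃ j ∉ I s, IsPseudovertex v (a s) I' j := by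
  refine exists_isPseudovertex_of_tropPoly_eq_inter_halfSpace
    (.biInter fun t _ => isTropConvex_halfSpace (a t) (I t)) ?_ ha hnonred
  rw [hrep, Set.inter_comm]
  exact iInf_split_single (fun t => halfSpace (a t) (I t)) s

end TropicalConvexity

/-- in a non-redundant external representation of the tropical polytope `P` by
half-spaces whose apices belong to `P`, every apex is an `(I,j)`-pseudovertex of `P`. -/
theorem nonredundant_apex_isPseudovertex {n p m : ℕ} (hn : 2 ≤ n)
    (vs : Fin p → Fin n → ℝ) (a : Fin m → Fin n → ℝ) (I : Fin m → Set (Fin n))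
    (ha : ∀ s, a s ∈ tropPoly vs)
    (hIne : ∀ s, (I s).Nonempty) (hIpr : ∀ s, I s ≠ Set.univ)
    (hrep : tropPoly vs = ⋂ s, halfSpace (a s) (I s))
    (hnonred : ∀ s : Fin m, (⋂ t ∈ ({s}ᶜ : Set (Fin m)), halfSpace (a t) (I t)) ≠ tropPoly vs) :
    ∀ s : Fin m, ∃ (I' : Set (Fin n)) (j : Fin n), I'.Nonempty ∧ I' ≠ Set.univ ∧ j ∉ I' ∧
      IsPseudovertex vs (a s) I' j := by
  intro s
  obtain ⟨I', hI', j, hj, hpv⟩ :=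
    nonredundant_apex_isPseudovertex_general (ha s) hrep (hnonred s)
  have hjI' : j ∉ I' := fun h => hj (hI' h)
  exact ⟨I', j, hpv.nonempty hjI', (Set.ne_univ_iff_exists_notMem I').2 ⟨j, hjI'⟩, hjI', hpv⟩
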